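/- Let $d \ge 1$ and $p \in (1,2)$. Set $\kappa_p = 2^{2-p}(3-p)$, $\kappa'_p = p-1$ and $c'_p = 2^{p(p-2)/2}(\kappa'_p)^{p/2}$. Let $k : \mathbb{R}^d \times \mathbb{R}^d \to [0,\infty)$ be measurable and $u, v : \mathbb{R}^d \to \mathbb{R}$ measurable with $\mathcal{E}_k(u,u) < \infty$, $\mathcal{E}_k(v,v) < \infty$ and $\mathcal{E}_k(u,u) + \mathcal{E}_k(v,v) > 0$. Then $\mathcal{E}_k(u-v,u-v) < \infty$, the quantity $D := \mathcal{E}_k(u,u-v) - \mathcal{E}_k(v,u-v)$ is well defined and nonnegative, and $D \le \kappa_p\, \mathcal{E}_k(u-v,u-v)$ as well as $D^{p/2} \ge c'_p\, \mathcal{E}_k(u-v,u-v)\,\big(\mathcal{E}_k(u,u) + \mathcal{E}_k(v,v)\big)^{(p-2)/2}$ (note $(p-2)/2 < 0$, the last factor being a positive real power of a positive real). -/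

import Mathlib

open MeasureTheory

/-- The nonlocal form `𝓔_k(u,v)` over `ℝ^d × ℝ^d` (product Lebesgue measure). -/
noncomputable def nlForm (d : ℕ) (p : ℝ)
    (k : EuclideanSpace ℝ (Fin d) → EuclideanSpace ℝ (Fin d) → ℝ)
    (u v : EuclideanSpace ℝ (Fin d) → ℝ) : ℝ :=
  ∫ z : EuclideanSpace ℝ (Fin d) × EuclideanSpace ℝ (Fin d),
    |u z.1 - u z.2| ^ (p - 2) * (u z.1 - u z.2) * (v z.1 - v z.2) * k z.1 z.2

/-- The (finite) energy `𝓔_k(u,u) = ∫∫ |u(x)-u(y)|^p k(x,y)` as a real number. -/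
noncomputable def nlDiag (d : ℕ) (p : ℝ)
    (k : EuclideanSpace ℝ (Fin d) → EuclideanSpace ℝ (Fin d) → ℝ)
    (u : EuclideanSpace ℝ (Fin d) → ℝ) : ℝ :=
  ∫ z : EuclideanSpace ℝ (Fin d) × EuclideanSpace ℝ (Fin d),
    |u z.1 - u z.2| ^ p * k z.1 z.2

/-!
The weighted measure `k(x,y) dx dy` turns the increments `u(x) - u(y)` of functions of finite energy
into elements of `L^p`, so everything is a statement about the duality map `φ(t) = |t|^(p-2) t` of
`L^p(μ)`. For `1 < p ≤ 2`, `φ` is `(p-1)`-Hölder with constant `2^(2-p)`, which gives the upper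
bound after integration, and it satisfies
`(φ a - φ b) (a - b) ≥ (p - 1) |a - b|^2 (|a| + |b|)^(p-2)`.
The lower bound follows by writing
`|a - b|^p = (|a - b|^2 (|a| + |b|)^(p-2))^(p/2) ((|a| + |b|)^p)^(1-p/2)`
and applying Hölder's inequality with weights `p/2` and `1 - p/2`.
-/

theorem forall_of_swap_of_neg {G : Type*} [AddCommGroup G] [LinearOrder G] [IsOrderedAddMonoid G]
    {P : G → G → Prop} (swap : ∀ a b, P a b → P b a) (neg : ∀ a b, P a b → P (-a) (-b))
    (same_sign : ∀ a b, 0 ≤ b → b ≤ a → P a b)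
    (opposite_sign : ∀ a b, 0 ≤ a → 0 ≤ b → P a (-b)) (a b : G) : P a b := by
  have of_nonneg (a b : G) (ha : 0 ≤ a) : P a b := by
    rcases le_total 0 b with hb | hb
    · rcases le_total b a with hab | hab
      · exact same_sign a b hb hab
      · exact swap _ _ (same_sign b a ha hab)
    · simpa only [neg_neg] using opposite_sign a (-b) ha (neg_nonneg.2 hb)
  rcases le_total 0 a with ha | ha
  · exact of_nonneg a b ha
  · simpa only [neg_neg] using neg _ _ (of_nonneg (-a) (-b) (neg_nonneg.2 ha))

section RealPowers

variable {a b q : ℝ}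

theorem rpow_sub_rpow_le_sub_rpow (hb : 0 ≤ b) (hab : b ≤ a) (hq0 : 0 ≤ q) (hq1 : q ≤ 1) :
    a ^ q - b ^ q ≤ (a - b) ^ q := by
  have subadditive := Real.rpow_add_le_add_rpow (sub_nonneg.2 hab) hb hq0 hq1
  rw [sub_add_cancel] at subadditive
  linarith

theorem rpow_add_rpow_le_two_rpow_mul_add_rpow (ha : 0 ≤ a) (hb : 0 ≤ b) (hq0 : 0 ≤ q)
    (hq1 : q ≤ 1) : a ^ q + b ^ q ≤ 2 ^ (1 - q) * (a + b) ^ q := by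
  have midpoint : 2⁻¹ * a ^ q + 2⁻¹ * b ^ q ≤ (2⁻¹ * a + 2⁻¹ * b) ^ q :=
    (Real.concaveOn_rpow hq0 hq1).2 ha hb (by norm_num) (by norm_num) (by norm_num)
  rw [← mul_add, ← mul_add, Real.mul_rpow (by norm_num) (by positivity),
    inv_mul_le_iff₀ two_pos] at midpoint
  calc a ^ q + b ^ q ≤ 2 * (2⁻¹ ^ q * (a + b) ^ q) := midpoint
    _ = 2 ^ (1 - q) * (a + b) ^ q := by
      rw [Real.rpow_sub two_pos, Real.rpow_one, Real.inv_rpow two_pos.le]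
      ring

theorem mul_rpow_sub_one_mul_sub_le_rpow_sub_rpow (ha : 0 < a) (hb : 0 ≤ b) (hq0 : 0 ≤ q)
    (hq1 : q ≤ 1) : q * a ^ (q - 1) * (a - b) ≤ a ^ q - b ^ q := by
  have bernoulli : (b / a) ^ q ≤ 1 + q * (b / a - 1) := by
    have hs : -1 ≤ b / a - 1 := by linarith [div_nonneg hb ha.le]
    simpa only [add_sub_cancel] using rpow_one_add_le_one_add_mul_self hs hq0 hq1
  rw [Real.div_rpow hb ha.le, div_le_iff₀ (by positivity)] at bernoulli
  have tangent : (1 + q * (b / a - 1)) * a ^ q = a ^ q - q * a ^ (q - 1) * (a - b) := by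
    rw [Real.rpow_sub_one ha.ne']
    field_simp
    ring
  linarith

theorem rpow_sub_one_mul_self (ha : 0 ≤ a) (hq : q ≠ 0) : a ^ (q - 1) * a = a ^ q := by
  rw [← Real.rpow_add_one' ha (by simpa using hq), sub_add_cancel]

theorem add_rpow_le_two_rpow_mul (ha : 0 ≤ a) (hb : 0 ≤ b) (hq : 1 ≤ q) :
    (a + b) ^ q ≤ 2 ^ (q - 1) * (a ^ q + b ^ q) := by
  lift a to NNReal using ha
  lift b to NNReal using hb
  exact_mod_cast NNReal.rpow_add_le_mul_rpow_add_rpow a b hq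

end RealPowers

/-- The duality map `t ↦ |t|^(p-2) t` of `ℝ` with respect to the `p`-th power of the modulus; it is
the nonlinearity in the form `𝓔_k`. It vanishes at `t = 0`, whatever the value of `0 ^ (p - 2)`. -/
noncomputable def dualityMap (p t : ℝ) : ℝ :=
  |t| ^ (p - 2) * t

section DualityMap

variable {p a b : ℝ}

theorem measurable_dualityMap (p : ℝ) : Measurable (dualityMap p) := by
  unfold dualityMap
  fun_prop

theorem dualityMap_neg (p a : ℝ) : dualityMap p (-a) = -dualityMap p a := by
  rw [dualityMap, dualityMap, abs_neg, mul_neg]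

theorem dualityMap_of_nonneg (hp : 1 < p) (ha : 0 ≤ a) : dualityMap p a = a ^ (p - 1) := by
  rw [dualityMap, abs_of_nonneg ha, ← rpow_sub_one_mul_self ha (sub_pos.2 hp).ne']
  ring_nf

theorem abs_dualityMap (hp : 1 < p) (a : ℝ) : |dualityMap p a| = |a| ^ (p - 1) := by
  rw [← dualityMap_of_nonneg hp (abs_nonneg a), dualityMap, dualityMap, abs_mul, abs_abs,
    abs_of_nonneg (by positivity : 0 ≤ |a| ^ (p - 2))]

theorem dualityMap_sub_mul_sub_le (hp1 : 1 < p) (hp2 : p ≤ 2) (a b : ℝ) :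
    (dualityMap p a - dualityMap p b) * (a - b) ≤ 2 ^ (2 - p) * |a - b| ^ p := by
  have hq0 : 0 ≤ p - 1 := by linarith
  have hq1 : p - 1 ≤ 1 := by linarith
  have hp0 : p ≠ 0 := by positivity
  induction a, b using forall_of_swap_of_neg with
  | swap a b h =>
    rw [abs_sub_comm]
    linarith
  | neg a b h =>
    rw [dualityMap_neg, dualityMap_neg, neg_sub_neg, neg_sub_neg, abs_sub_comm]
    linarith
  | same_sign a b hb hab =>
    have hd : 0 ≤ a - b := sub_nonneg.2 hab
    rw [dualityMap_of_nonneg hp1 (hb.trans hab), dualityMap_of_nonneg hp1 hb, abs_of_nonneg hd]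
    calc (a ^ (p - 1) - b ^ (p - 1)) * (a - b) ≤ (a - b) ^ (p - 1) * (a - b) := by
          gcongr
          exact rpow_sub_rpow_le_sub_rpow hb hab hq0 hq1
      _ = 1 * (a - b) ^ p := by rw [rpow_sub_one_mul_self hd hp0, one_mul]
      _ ≤ 2 ^ (2 - p) * (a - b) ^ p := by
          gcongr
          exact Real.one_le_rpow one_le_two (by linarith)
  | opposite_sign a b ha hb =>
    have hs : 0 ≤ a + b := add_nonneg ha hb
    rw [dualityMap_neg, dualityMap_of_nonneg hp1 ha, dualityMap_of_nonneg hp1 hb, sub_neg_eq_add,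
      sub_neg_eq_add, abs_of_nonneg hs]
    calc (a ^ (p - 1) + b ^ (p - 1)) * (a + b)
        ≤ 2 ^ (1 - (p - 1)) * (a + b) ^ (p - 1) * (a + b) := by
          gcongr
          exact rpow_add_rpow_le_two_rpow_mul_add_rpow ha hb hq0 hq1
      _ = 2 ^ (2 - p) * (a + b) ^ p := by
          rw [mul_assoc, rpow_sub_one_mul_self hs hp0]
          ring_nf

theorem mul_sub_sq_mul_rpow_le (hp1 : 1 < p) (hp2 : p ≤ 2) (hb : 0 ≤ b) (hab : b ≤ a) :
    (p - 1) * (a - b) ^ 2 * (a + b) ^ (p - 2) ≤ (a ^ (p - 1) - b ^ (p - 1)) * (a - b) := by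
  have hq : 0 ≤ p - 1 := by linarith
  rcases (hb.trans hab).eq_or_lt with rfl | ha
  · simp [le_antisymm hab hb]
  calc (p - 1) * (a - b) ^ 2 * (a + b) ^ (p - 2) ≤ (p - 1) * (a - b) ^ 2 * a ^ (p - 2) := by
        refine mul_le_mul_of_nonneg_left ?_ (by positivity)
        exact Real.rpow_le_rpow_of_nonpos ha (le_add_of_nonneg_right hb) (by linarith)
    _ = (p - 1) * a ^ (p - 1 - 1) * (a - b) * (a - b) := by ring_nf
    _ ≤ (a ^ (p - 1) - b ^ (p - 1)) * (a - b) := by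
        refine mul_le_mul_of_nonneg_right ?_ (sub_nonneg.2 hab)
        exact mul_rpow_sub_one_mul_sub_le_rpow_sub_rpow ha hb hq (by linarith)

theorem mul_add_sq_mul_rpow_le (hp1 : 1 < p) (hp2 : p ≤ 2) (ha : 0 ≤ a) (hb : 0 ≤ b) :
    (p - 1) * (a + b) ^ 2 * (a + b) ^ (p - 2) ≤ (a ^ (p - 1) + b ^ (p - 1)) * (a + b) := by
  have hs : 0 ≤ a + b := add_nonneg ha hb
  calc (p - 1) * (a + b) ^ 2 * (a + b) ^ (p - 2)
      = (p - 1) * ((a + b) ^ (p - 1) * (a + b)) := by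
        rw [← rpow_sub_one_mul_self hs (sub_pos.2 hp1).ne']
        ring_nf
    _ ≤ 1 * ((a + b) ^ (p - 1) * (a + b)) := by
        gcongr
        linarith
    _ ≤ (a ^ (p - 1) + b ^ (p - 1)) * (a + b) := by
        rw [one_mul]
        gcongr
        exact Real.rpow_add_le_add_rpow ha hb (by linarith) (by linarith)

theorem mul_sub_sq_mul_rpow_le_dualityMap_sub_mul_sub (hp1 : 1 < p) (hp2 : p ≤ 2) (a b : ℝ) :
    (p - 1) * (a - b) ^ 2 * (|a| + |b|) ^ (p - 2) ≤
      (dualityMap p a - dualityMap p b) * (a - b) := by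
  induction a, b using forall_of_swap_of_neg with
  | swap a b h =>
    rw [add_comm |b|]
    linarith
  | neg a b h =>
    rw [dualityMap_neg, dualityMap_neg, abs_neg, abs_neg]
    linarith
  | same_sign a b hb hab =>
    have ha : 0 ≤ a := hb.trans hab
    rw [dualityMap_of_nonneg hp1 ha, dualityMap_of_nonneg hp1 hb, abs_of_nonneg ha,
      abs_of_nonneg hb]
    exact mul_sub_sq_mul_rpow_le hp1 hp2 hb hab
  | opposite_sign a b ha hb =>
    rw [dualityMap_neg, dualityMap_of_nonneg hp1 ha, dualityMap_of_nonneg hp1 hb, sub_neg_eq_add,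
      sub_neg_eq_add, abs_neg, abs_of_nonneg ha, abs_of_nonneg hb]
    exact mul_add_sq_mul_rpow_le hp1 hp2 ha hb

theorem dualityMap_sub_mul_sub_nonneg (hp1 : 1 < p) (hp2 : p ≤ 2) (a b : ℝ) :
    0 ≤ (dualityMap p a - dualityMap p b) * (a - b) :=
  have : 0 ≤ p - 1 := by linarith
  le_trans (by positivity) (mul_sub_sq_mul_rpow_le_dualityMap_sub_mul_sub hp1 hp2 a b)

theorem mul_abs_sub_rpow_le (hp1 : 1 < p) (hp2 : p ≤ 2) (a b : ℝ) :
    (p - 1) ^ (p / 2) * |a - b| ^ p ≤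
      ((dualityMap p a - dualityMap p b) * (a - b)) ^ (p / 2) *
        ((|a| + |b|) ^ p) ^ (1 - p / 2) := by
  have hq : 0 < p - 1 := by linarith
  have hD := dualityMap_sub_mul_sub_nonneg hp1 hp2 a b
  rcases (by positivity : 0 ≤ |a| + |b|).eq_or_lt with hm | hm
  · have hab : |a - b| = 0 := le_antisymm ((abs_sub a b).trans hm.ge) (abs_nonneg _)
    rw [hab, Real.zero_rpow (by positivity), mul_zero]
    positivity
  set m := |a| + |b|
  have factor_sq : ((a - b) ^ 2) ^ (p / 2) = |a - b| ^ p := by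
    rw [← sq_abs, ← Real.rpow_natCast_mul (abs_nonneg _)]
    congr 1
    push_cast
    ring
  have cancel : (m ^ (p - 2)) ^ (p / 2) * (m ^ p) ^ (1 - p / 2) = 1 := by
    rw [← Real.rpow_mul hm.le, ← Real.rpow_mul hm.le, ← Real.rpow_add hm]
    ring_nf
    exact Real.rpow_zero m
  calc (p - 1) ^ (p / 2) * |a - b| ^ p
      = (p - 1) ^ (p / 2) * ((a - b) ^ 2) ^ (p / 2) * (m ^ (p - 2)) ^ (p / 2) *
          (m ^ p) ^ (1 - p / 2) := by
        rw [factor_sq, mul_assoc _ _ (_ ^ (1 - p / 2)), cancel, mul_one]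
    _ = ((p - 1) * (a - b) ^ 2 * m ^ (p - 2)) ^ (p / 2) * (m ^ p) ^ (1 - p / 2) := by
        rw [Real.mul_rpow (by positivity) (by positivity), Real.mul_rpow hq.le (by positivity)]
    _ ≤ ((dualityMap p a - dualityMap p b) * (a - b)) ^ (p / 2) * (m ^ p) ^ (1 - p / 2) := by
        refine mul_le_mul_of_nonneg_right ?_ (by positivity)
        exact Real.rpow_le_rpow (by positivity)
          (mul_sub_sq_mul_rpow_le_dualityMap_sub_mul_sub hp1 hp2 a b) (by positivity)

theorem abs_dualityMap_mul_le (hp : 1 < p) (a b : ℝ) :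
    |dualityMap p a * b| ≤ (|a| + |b|) ^ p := by
  have : 0 ≤ p - 1 := by linarith
  calc |dualityMap p a * b| = |a| ^ (p - 1) * |b| := by rw [abs_mul, abs_dualityMap hp]
    _ ≤ (|a| + |b|) ^ (p - 1) * (|a| + |b|) := by
        gcongr
        · exact le_add_of_nonneg_right (abs_nonneg b)
        · exact le_add_of_nonneg_left (abs_nonneg a)
    _ = (|a| + |b|) ^ p := rpow_sub_one_mul_self (by positivity) (by positivity)

end DualityMap

/-- The pairing `∫ |f|^(p-2) f g ∂μ` of `g` with the duality map of `f` in `L^p(μ)`. The form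
`𝓔_k(u,v)` is the case where `μ` is `k(x,y) dx dy` and `f`, `g` are the increments of `u`, `v`. -/
noncomputable def dualityPairing {α : Type*} [MeasurableSpace α] (μ : Measure α) (p : ℝ)
    (f g : α → ℝ) : ℝ :=
  ∫ x, dualityMap p (f x) * g x ∂μ

section Lebesgue

variable {α : Type*} [MeasurableSpace α] {μ : Measure α} {p : ℝ} {f g h : α → ℝ}

theorem memLp_ofReal_iff_integrable_abs_rpow (hp : 0 < p) (hf : AEStronglyMeasurable f μ) :
    MemLp f (ENNReal.ofReal p) μ ↔ Integrable (fun x ↦ |f x| ^ p) μ := by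
  rw [← integrable_norm_rpow_iff hf (by simpa using hp) ENNReal.ofReal_ne_top]
  simp only [Real.norm_eq_abs, ENNReal.toReal_ofReal hp.le]

theorem integrable_abs_rpow_of_memLp (hp : 0 < p) (hf : MemLp f (ENNReal.ofReal p) μ) :
    Integrable (fun x ↦ |f x| ^ p) μ :=
  (memLp_ofReal_iff_integrable_abs_rpow hp hf.1).1 hf

theorem integrable_abs_add_abs_rpow (hp : 0 < p) (hf : MemLp f (ENNReal.ofReal p) μ)
    (hg : MemLp g (ENNReal.ofReal p) μ) : Integrable (fun x ↦ (|f x| + |g x|) ^ p) μ := by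
  refine (integrable_abs_rpow_of_memLp hp (hf.abs.add hg.abs)).congr (.of_forall fun x ↦ ?_)
  exact congrArg (· ^ p) (abs_of_nonneg (add_nonneg (abs_nonneg (f x)) (abs_nonneg (g x))))

theorem integral_abs_add_abs_rpow_le (hp : 1 ≤ p) (hf : MemLp f (ENNReal.ofReal p) μ)
    (hg : MemLp g (ENNReal.ofReal p) μ) :
    ∫ x, (|f x| + |g x|) ^ p ∂μ ≤
      2 ^ (p - 1) * ((∫ x, |f x| ^ p ∂μ) + ∫ x, |g x| ^ p ∂μ) := by
  have hp0 : 0 < p := by linarith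
  have hfp := integrable_abs_rpow_of_memLp hp0 hf
  have hgp := integrable_abs_rpow_of_memLp hp0 hg
  rw [← integral_add hfp hgp, ← integral_const_mul]
  exact integral_mono (integrable_abs_add_abs_rpow hp0 hf hg) ((hfp.add hgp).const_mul _)
    fun x ↦ add_rpow_le_two_rpow_mul (abs_nonneg _) (abs_nonneg _) hp

theorem integral_le_rpow_mul_rpow_of_le {F G : α → ℝ} {s t : ℝ} (hs : 0 ≤ s) (ht : 0 ≤ t)
    (hst : s + t = 1) (hh0 : 0 ≤ᵐ[μ] h) (hh : AEStronglyMeasurable h μ)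
    (hF0 : 0 ≤ᵐ[μ] F) (hF : Integrable F μ) (hG0 : 0 ≤ᵐ[μ] G) (hG : Integrable G μ)
    (hle : ∀ᵐ x ∂μ, h x ≤ F x ^ s * G x ^ t) :
    ∫ x, h x ∂μ ≤ (∫ x, F x ∂μ) ^ s * (∫ x, G x ∂μ) ^ t := by
  have hF_int : 0 ≤ ∫ x, F x ∂μ := integral_nonneg_of_ae hF0
  have hG_int : 0 ≤ ∫ x, G x ∂μ := integral_nonneg_of_ae hG0
  rw [integral_eq_lintegral_of_nonneg_ae hh0 hh]
  refine ENNReal.toReal_le_of_le_ofReal (by positivity) ?_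
  calc ∫⁻ x, ENNReal.ofReal (h x) ∂μ
      ≤ ∫⁻ x, ENNReal.ofReal (F x) ^ s * ENNReal.ofReal (G x) ^ t ∂μ := by
        refine lintegral_mono_ae ?_
        filter_upwards [hF0, hG0, hle] with x hFx hGx hlex
        rw [ENNReal.ofReal_rpow_of_nonneg hFx hs, ENNReal.ofReal_rpow_of_nonneg hGx ht,
          ← ENNReal.ofReal_mul (Real.rpow_nonneg hFx s)]
        exact ENNReal.ofReal_le_ofReal hlex
    _ ≤ (∫⁻ x, ENNReal.ofReal (F x) ∂μ) ^ s * (∫⁻ x, ENNReal.ofReal (G x) ∂μ) ^ t :=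
        ENNReal.lintegral_mul_norm_pow_le hF.aemeasurable.ennreal_ofReal
          hG.aemeasurable.ennreal_ofReal hs ht hst
    _ = ENNReal.ofReal ((∫ x, F x ∂μ) ^ s * (∫ x, G x ∂μ) ^ t) := by
        rw [← ofReal_integral_eq_lintegral_ofReal hF hF0,
          ← ofReal_integral_eq_lintegral_ofReal hG hG0,
          ENNReal.ofReal_rpow_of_nonneg hF_int hs, ENNReal.ofReal_rpow_of_nonneg hG_int ht,
          ENNReal.ofReal_mul (by positivity)]

theorem integrable_dualityMap_mul (hp : 1 < p) (hf : MemLp f (ENNReal.ofReal p) μ)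
    (hg : MemLp g (ENNReal.ofReal p) μ) : Integrable (fun x ↦ dualityMap p (f x) * g x) μ := by
  refine (integrable_abs_add_abs_rpow (by linarith) hf hg).mono' ?_
    (.of_forall fun x ↦ abs_dualityMap_mul_le hp (f x) (g x))
  exact ((measurable_dualityMap p).comp_aemeasurable hf.1.aemeasurable).aestronglyMeasurable.mul
    hg.1

theorem integrable_dualityMap_sub_mul (hp : 1 < p) (hf : MemLp f (ENNReal.ofReal p) μ)
    (hg : MemLp g (ENNReal.ofReal p) μ) (hh : MemLp h (ENNReal.ofReal p) μ) :
    Integrable (fun x ↦ (dualityMap p (f x) - dualityMap p (g x)) * h x) μ := by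
  simp only [sub_mul]
  exact (integrable_dualityMap_mul hp hf hh).sub (integrable_dualityMap_mul hp hg hh)

theorem dualityPairing_sub_dualityPairing (hp : 1 < p) (hf : MemLp f (ENNReal.ofReal p) μ)
    (hg : MemLp g (ENNReal.ofReal p) μ) (hh : MemLp h (ENNReal.ofReal p) μ) :
    dualityPairing μ p f h - dualityPairing μ p g h =
      ∫ x, (dualityMap p (f x) - dualityMap p (g x)) * h x ∂μ := by
  simp only [sub_mul]
  exact (integral_sub (integrable_dualityMap_mul hp hf hh)
    (integrable_dualityMap_mul hp hg hh)).symm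

theorem dualityPairing_sub_nonneg (hp1 : 1 < p) (hp2 : p ≤ 2) (hf : MemLp f (ENNReal.ofReal p) μ)
    (hg : MemLp g (ENNReal.ofReal p) μ) :
    0 ≤ dualityPairing μ p f (f - g) - dualityPairing μ p g (f - g) := by
  rw [dualityPairing_sub_dualityPairing hp1 hf hg (hf.sub hg)]
  exact integral_nonneg fun x ↦ dualityMap_sub_mul_sub_nonneg hp1 hp2 (f x) (g x)

theorem dualityPairing_sub_le (hp1 : 1 < p) (hp2 : p ≤ 2) (hf : MemLp f (ENNReal.ofReal p) μ)
    (hg : MemLp g (ENNReal.ofReal p) μ) :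
    dualityPairing μ p f (f - g) - dualityPairing μ p g (f - g) ≤
      2 ^ (2 - p) * ∫ x, |(f - g) x| ^ p ∂μ := by
  rw [dualityPairing_sub_dualityPairing hp1 hf hg (hf.sub hg), ← integral_const_mul]
  exact integral_mono (integrable_dualityMap_sub_mul hp1 hf hg (hf.sub hg))
    ((integrable_abs_rpow_of_memLp (by linarith) (hf.sub hg)).const_mul _)
    fun x ↦ dualityMap_sub_mul_sub_le hp1 hp2 (f x) (g x)

theorem mul_integral_abs_sub_rpow_le (hp1 : 1 < p) (hp2 : p ≤ 2)
    (hf : MemLp f (ENNReal.ofReal p) μ) (hg : MemLp g (ENNReal.ofReal p) μ) :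
    (p - 1) ^ (p / 2) * ∫ x, |(f - g) x| ^ p ∂μ ≤
      (dualityPairing μ p f (f - g) - dualityPairing μ p g (f - g)) ^ (p / 2) *
        (∫ x, (|f x| + |g x|) ^ p ∂μ) ^ (1 - p / 2) := by
  have hp0 : 0 < p := by linarith
  have : 0 ≤ p - 1 := by linarith
  have hfg := integrable_abs_rpow_of_memLp hp0 (hf.sub hg)
  rw [dualityPairing_sub_dualityPairing hp1 hf hg (hf.sub hg), ← integral_const_mul]
  exact integral_le_rpow_mul_rpow_of_le (by linarith) (by linarith) (by ring)
    (.of_forall fun x ↦ by positivity) (hfg.const_mul _).aestronglyMeasurable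
    (.of_forall fun x ↦ dualityMap_sub_mul_sub_nonneg hp1 hp2 (f x) (g x))
    (integrable_dualityMap_sub_mul hp1 hf hg (hf.sub hg))
    (.of_forall fun x ↦ by positivity) (integrable_abs_add_abs_rpow hp0 hf hg)
    (.of_forall fun x ↦ mul_abs_sub_rpow_le hp1 hp2 (f x) (g x))

theorem mul_integral_abs_sub_rpow_mul_le (hp1 : 1 < p) (hp2 : p ≤ 2)
    (hf : MemLp f (ENNReal.ofReal p) μ) (hg : MemLp g (ENNReal.ofReal p) μ)
    (hS : 0 < (∫ x, |f x| ^ p ∂μ) + ∫ x, |g x| ^ p ∂μ) :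
    2 ^ (p * (p - 2) / 2) * (p - 1) ^ (p / 2) * (∫ x, |(f - g) x| ^ p ∂μ) *
        ((∫ x, |f x| ^ p ∂μ) + ∫ x, |g x| ^ p ∂μ) ^ ((p - 2) / 2) ≤
      (dualityPairing μ p f (f - g) - dualityPairing μ p g (f - g)) ^ (p / 2) := by
  have hD := dualityPairing_sub_nonneg hp1 hp2 hf hg
  have hsum := integral_abs_add_abs_rpow_le hp1.le hf hg
  have hholder := mul_integral_abs_sub_rpow_le hp1 hp2 hf hg
  have : 0 ≤ ∫ x, (|f x| + |g x|) ^ p ∂μ := integral_nonneg fun x ↦ by positivity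
  set S := (∫ x, |f x| ^ p ∂μ) + ∫ x, |g x| ^ p ∂μ
  set D := dualityPairing μ p f (f - g) - dualityPairing μ p g (f - g)
  set E := ∫ x, |(f - g) x| ^ p ∂μ
  have hT : ∫ x, (|f x| + |g x|) ^ p ∂μ ≤ 2 ^ p * S := hsum.trans <| by
    gcongr
    · exact one_le_two
    · linarith
  calc 2 ^ (p * (p - 2) / 2) * (p - 1) ^ (p / 2) * E * S ^ ((p - 2) / 2)
      = (p - 1) ^ (p / 2) * E * (2 ^ p * S) ^ ((p - 2) / 2) := by
        rw [Real.mul_rpow (by positivity) hS.le, ← Real.rpow_mul two_pos.le]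
        ring_nf
    _ ≤ D ^ (p / 2) * (2 ^ p * S) ^ (1 - p / 2) * (2 ^ p * S) ^ ((p - 2) / 2) := by
        refine mul_le_mul_of_nonneg_right (hholder.trans ?_) (by positivity)
        gcongr
        linarith
    _ = D ^ (p / 2) := by
        rw [mul_assoc, ← Real.rpow_add (by positivity)]
        ring_nf
        rw [Real.rpow_zero, mul_one]

theorem stmt_8_general (hp1 : 1 < p) (hp2 : p ≤ 2) (hf : MemLp f (ENNReal.ofReal p) μ)
    (hg : MemLp g (ENNReal.ofReal p) μ)
    (hS : 0 < (∫ x, |f x| ^ p ∂μ) + ∫ x, |g x| ^ p ∂μ) :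
    MemLp (f - g) (ENNReal.ofReal p) μ ∧
    Integrable (fun x ↦ dualityMap p (f x) * (f - g) x) μ ∧
    Integrable (fun x ↦ dualityMap p (g x) * (f - g) x) μ ∧
    0 ≤ dualityPairing μ p f (f - g) - dualityPairing μ p g (f - g) ∧
    dualityPairing μ p f (f - g) - dualityPairing μ p g (f - g) ≤
      2 ^ (2 - p) * (3 - p) * ∫ x, |(f - g) x| ^ p ∂μ ∧
    2 ^ (p * (p - 2) / 2) * (p - 1) ^ (p / 2) * (∫ x, |(f - g) x| ^ p ∂μ) *
        ((∫ x, |f x| ^ p ∂μ) + ∫ x, |g x| ^ p ∂μ) ^ ((p - 2) / 2) ≤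
      (dualityPairing μ p f (f - g) - dualityPairing μ p g (f - g)) ^ (p / 2) := by
  refine ⟨hf.sub hg, integrable_dualityMap_mul hp1 hf (hf.sub hg),
    integrable_dualityMap_mul hp1 hg (hf.sub hg), dualityPairing_sub_nonneg hp1 hp2 hf hg,
    (dualityPairing_sub_le hp1 hp2 hf hg).trans ?_,
    mul_integral_abs_sub_rpow_mul_le hp1 hp2 hf hg hS⟩
  gcongr
  exact le_mul_of_one_le_right (by positivity) (by linarith)

end Lebesgue

/-- The increment `(x, y) ↦ u x - u y` of a function `u`. -/
def increment {X : Type*} (u : X → ℝ) (z : X × X) : ℝ :=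
  u z.1 - u z.2

/-- The measure `k(x,y) dx dy` on the product of a measure space with itself. Negative values of `k`
are truncated to `0`. -/
noncomputable def kernelMeasure {X : Type*} [MeasureSpace X] (k : X → X → ℝ) : Measure (X × X) :=
  volume.withDensity fun z ↦ ENNReal.ofReal (k z.1 z.2)

theorem increment_sub {X : Type*} (u v : X → ℝ) :
    increment (u - v) = increment u - increment v :=
  funext fun z ↦ sub_sub_sub_comm (u z.1) (v z.1) (u z.2) (v z.2)

section KernelMeasure

variable {X : Type*} [MeasureSpace X] {k : X → X → ℝ}

theorem integrable_kernelMeasure_iff (hk : Measurable fun z : X × X ↦ k z.1 z.2)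
    (hk0 : ∀ x y, 0 ≤ k x y) {F : X × X → ℝ} :
    Integrable F (kernelMeasure k) ↔ Integrable fun z : X × X ↦ F z * k z.1 z.2 := by
  rw [kernelMeasure, integrable_withDensity_iff hk.ennreal_ofReal (by simp)]
  simp only [ENNReal.toReal_ofReal (hk0 _ _)]

theorem integral_kernelMeasure (hk : Measurable fun z : X × X ↦ k z.1 z.2)
    (hk0 : ∀ x y, 0 ≤ k x y) (F : X × X → ℝ) :
    ∫ z, F z ∂kernelMeasure k = ∫ z : X × X, F z * k z.1 z.2 := by
  rw [kernelMeasure, integral_withDensity_eq_integral_toReal_smul hk.ennreal_ofReal (by simp)]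
  simp only [ENNReal.toReal_ofReal (hk0 _ _), smul_eq_mul, mul_comm]

theorem memLp_increment_iff {p : ℝ} (hp : 0 < p) (hk : Measurable fun z : X × X ↦ k z.1 z.2)
    (hk0 : ∀ x y, 0 ≤ k x y) {u : X → ℝ} (hu : Measurable u) :
    MemLp (increment u) (ENNReal.ofReal p) (kernelMeasure k) ↔
      Integrable fun z : X × X ↦ |u z.1 - u z.2| ^ p * k z.1 z.2 := by
  have hmeas : Measurable (increment u) :=
    (hu.comp measurable_fst).sub (hu.comp measurable_snd)
  rw [memLp_ofReal_iff_integrable_abs_rpow hp hmeas.aestronglyMeasurable,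
    integrable_kernelMeasure_iff hk hk0]
  rfl

theorem integrable_dualityMap_increment_mul_iff (p : ℝ)
    (hk : Measurable fun z : X × X ↦ k z.1 z.2) (hk0 : ∀ x y, 0 ≤ k x y) (u v : X → ℝ) :
    Integrable (fun z ↦ dualityMap p (increment u z) * increment v z) (kernelMeasure k) ↔
      Integrable fun z : X × X ↦
        |u z.1 - u z.2| ^ (p - 2) * (u z.1 - u z.2) * (v z.1 - v z.2) * k z.1 z.2 :=
  integrable_kernelMeasure_iff hk hk0

end KernelMeasure

section NonlocalForm

variable {d : ℕ} {k : EuclideanSpace ℝ (Fin d) → EuclideanSpace ℝ (Fin d) → ℝ}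

theorem nlForm_eq_dualityPairing (p : ℝ)
    (hk : Measurable fun z : EuclideanSpace ℝ (Fin d) × EuclideanSpace ℝ (Fin d) ↦ k z.1 z.2)
    (hk0 : ∀ x y, 0 ≤ k x y) (u v : EuclideanSpace ℝ (Fin d) → ℝ) :
    nlForm d p k u v = dualityPairing (kernelMeasure k) p (increment u) (increment v) :=
  (integral_kernelMeasure hk hk0 _).symm

theorem nlDiag_eq_integral_kernelMeasure (p : ℝ)
    (hk : Measurable fun z : EuclideanSpace ℝ (Fin d) × EuclideanSpace ℝ (Fin d) ↦ k z.1 z.2)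
    (hk0 : ∀ x y, 0 ≤ k x y) (u : EuclideanSpace ℝ (Fin d) → ℝ) :
    nlDiag d p k u = ∫ z, |increment u z| ^ p ∂kernelMeasure k :=
  (integral_kernelMeasure hk hk0 _).symm

end NonlocalForm

/-- Case `1 < p < 2`: with `κ_p = 2^{2-p}(3-p)`, `κ'_p = p-1` and
`c'_p = 2^{p(p-2)/2} (κ'_p)^{p/2}`, if `𝓔_k(u,u), 𝓔_k(v,v) < ∞` and
`𝓔_k(u,u) + 𝓔_k(v,v) > 0` then `𝓔_k(u-v,u-v) < ∞`,
`D := 𝓔_k(u,u-v) - 𝓔_k(v,u-v)` is well defined and nonnegative,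
`D ≤ κ_p 𝓔_k(u-v,u-v)` and
`D^{p/2} ≥ c'_p 𝓔_k(u-v,u-v)(𝓔_k(u,u)+𝓔_k(v,v))^{(p-2)/2}`. -/
theorem stmt_8 (d : ℕ) (hd : 1 ≤ d) (p : ℝ) (hp1 : 1 < p) (hp2 : p < 2) (κ κ' c' : ℝ)
    (hκ : κ = (2 : ℝ) ^ (2 - p) * (3 - p))
    (hκ' : κ' = p - 1)
    (hc' : c' = (2 : ℝ) ^ (p * (p - 2) / 2) * κ' ^ (p / 2))
    (k : EuclideanSpace ℝ (Fin d) → EuclideanSpace ℝ (Fin d) → ℝ)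
    (hk : Measurable fun z : EuclideanSpace ℝ (Fin d) × EuclideanSpace ℝ (Fin d) => k z.1 z.2)
    (hk0 : ∀ x y, 0 ≤ k x y)
    (u v : EuclideanSpace ℝ (Fin d) → ℝ) (hu : Measurable u) (hv : Measurable v)
    (hEu : Integrable fun z : EuclideanSpace ℝ (Fin d) × EuclideanSpace ℝ (Fin d) =>
      |u z.1 - u z.2| ^ p * k z.1 z.2)
    (hEv : Integrable fun z : EuclideanSpace ℝ (Fin d) × EuclideanSpace ℝ (Fin d) =>
      |v z.1 - v z.2| ^ p * k z.1 z.2)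
    (hS : 0 < nlDiag d p k u + nlDiag d p k v) :
    (Integrable fun z : EuclideanSpace ℝ (Fin d) × EuclideanSpace ℝ (Fin d) =>
      |(u - v) z.1 - (u - v) z.2| ^ p * k z.1 z.2) ∧
    (Integrable fun z : EuclideanSpace ℝ (Fin d) × EuclideanSpace ℝ (Fin d) =>
      |u z.1 - u z.2| ^ (p - 2) * (u z.1 - u z.2) * ((u - v) z.1 - (u - v) z.2) * k z.1 z.2) ∧
    (Integrable fun z : EuclideanSpace ℝ (Fin d) × EuclideanSpace ℝ (Fin d) =>
      |v z.1 - v z.2| ^ (p - 2) * (v z.1 - v z.2) * ((u - v) z.1 - (u - v) z.2) * k z.1 z.2) ∧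
    0 ≤ nlForm d p k u (u - v) - nlForm d p k v (u - v) ∧
    nlForm d p k u (u - v) - nlForm d p k v (u - v) ≤ κ * nlDiag d p k (u - v) ∧
    c' * nlDiag d p k (u - v) * (nlDiag d p k u + nlDiag d p k v) ^ ((p - 2) / 2) ≤
      (nlForm d p k u (u - v) - nlForm d p k v (u - v)) ^ (p / 2) := by
  have hp0 : 0 < p := by linarith
  have hf := (memLp_increment_iff hp0 hk hk0 hu).2 hEu
  have hg := (memLp_increment_iff hp0 hk hk0 hv).2 hEv
  rw [← memLp_increment_iff hp0 hk hk0 (hu.sub hv),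
    ← integrable_dualityMap_increment_mul_iff p hk hk0 u,
    ← integrable_dualityMap_increment_mul_iff p hk hk0 v]
  simp only [nlForm_eq_dualityPairing p hk hk0, nlDiag_eq_integral_kernelMeasure p hk hk0,
    increment_sub, hκ, hc', hκ'] at hS ⊢
  exact stmt_8_general hp1 hp2.le hf hg hS
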